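/- For all (b,c) ∈ ℤ_{≥0}², the specialization of Q_{b,c} at y = 1 and z = 1 satisfies Q_{b,c}(x,1,1,w) = (−1)^c · ∏_{j=0}^{b+c−1}(x − q^{4j}) · ∏_{j=0}^{b+2c−1}(w − q^{2j}) in K[x,w]. -/

import Mathlib

/-!
Every term of the recursions carries a factor `y - 1` or `z - 1`, except the last one of each,
whose operator rescales only `x` by `q⁻⁴` and `w` by `q⁻²`. At `y = z = 1` the recursions therefore
collapse to one-term recursions. Since
`t ^ n ∏_{j<n} (t⁻¹ x - t ^ j) = ∏_{j<n} (x - t ^ (j + 1))`, rescaling and multiplying by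
`(x - 1) (w - 1)` adds one root to each product; the remaining factor `q^{2(b+2c+2)} - q² w` of the
recursion from `c` to `c + 1` contributes the sign and the second new root in `w`.
-/

noncomputable section

open MvPolynomial

/-- The field `K = ℚ(q)` of rational functions in `q` over `ℚ`. -/
abbrev K : Type := RatFunc ℚ

/-- The variable `q ∈ K = ℚ(q)`. -/
def q : K := RatFunc.X

/-- The polynomial ring `K[x,y,z,w]`. -/
abbrev P4 : Type := MvPolynomial (Fin 4) K

def xP : P4 := X 0
def yP : P4 := X 1
def zP : P4 := X 2
def wP : P4 := X 3

/-- The `K`-algebra map `K[x,y,z,w] → K[x,y,z,w]` rescaling the variables: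
`x ↦ q^a·x`, `y ↦ q^b·y`, `z ↦ q^c·z`, `w ↦ q^d·w`. -/
def scl (a b c d : ℤ) : P4 →ₐ[K] P4 :=
  aeval ![C (q ^ a) * X 0, C (q ^ b) * X 1, C (q ^ c) * X 2, C (q ^ d) * X 3]

/-- The polynomials `Q_{b,0}(x,y,z,w)`, defined by the recursion (rec1) of the paper. -/
def Qb0 : ℕ → P4
  | 0 => 1
  | b + 1 =>
      C (q ^ (4 * (b : ℤ))) * wP * yP * (zP - 1) * scl 0 0 (-4) 0 (Qb0 b)
    + C (q ^ (4 * (b : ℤ))) * wP * xP * (yP - 1) * yP * zP * scl 0 (-2) 0 0 (Qb0 b)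
    + C (q ^ (6 * (b : ℤ))) * (wP - 1) * (yP - 1) * scl 0 (-2) 0 (-2) (Qb0 b)
    + C (q ^ (4 * (b : ℤ))) * wP * (xP - 1) * yP * (zP - 1) * scl (-4) 2 (-4) 0 (Qb0 b)
    + C (q ^ (6 * (b : ℤ))) * (wP - 1) * (xP - 1) * yP * scl (-4) 0 0 (-2) (Qb0 b)

/-- The polynomials `Q_{b,c}(x,y,z,w)`: for `c ≥ 1` they are defined by the
recursion (rec2) of the paper, lowering `c`; for `c = 0` by `Qb0`. -/
def Q : ℕ → ℕ → P4
  | b, 0 => Qb0 b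
  | b, c + 1 =>
      - (C (q ^ (4 * (b : ℤ) + 8 * (c : ℤ))) * wP ^ 2 * yP * (zP - 1) * zP)
          * scl 0 0 (-4) 0 (Q b c)
    + (C (q ^ (4 * (b : ℤ) + 4 * (c : ℤ) - 2)) * wP * xP * (yP - 1) * zP)
          * (C (q ^ (2 * (b : ℤ) + 4 * (c : ℤ) + 4)) - C (q ^ (2 : ℤ)) * wP * yP * zP)
          * scl 0 (-2) 0 0 (Q b c)
    - (C (q ^ (6 * (b : ℤ) + 8 * (c : ℤ))) * (wP - 1) * wP * (yP - 1) * zP)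
          * scl 0 (-2) 0 (-2) (Q b c)
    + (C (q ^ (4 * (b : ℤ) + 8 * (c : ℤ) - 2)) * wP * (xP - 1) * (zP - 1))
          * (C (q ^ (2 * (b : ℤ) + 4 * (c : ℤ) + 4)) - C (q ^ (2 : ℤ)) * wP * yP * zP)
          * scl (-4) 2 (-4) 0 (Q b c)
    + (C (q ^ (6 * (b : ℤ) + 8 * (c : ℤ) - 2)) * (wP - 1) * (xP - 1))
          * (C (q ^ (2 * (b : ℤ) + 4 * (c : ℤ) + 4)) - C (q ^ (2 : ℤ)) * wP * yP * zP)
          * scl (-4) 0 0 (-2) (Q b c)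

section GaussProd

variable {R : Type*} [CommRing R]

/-- The Gauss polynomial `(x - 1)(x - t)⋯(x - t ^ (n - 1))`, the `t`-analogue of `(x - 1) ^ n`,
as an element of the ring containing `t` and `x`. -/
def gaussProd (t x : R) (n : ℕ) : R :=
  ∏ j ∈ Finset.range n, (x - t ^ j)

theorem gaussProd_zero (t x : R) : gaussProd t x 0 = 1 :=
  Finset.prod_range_zero _

theorem gaussProd_succ (t x : R) (n : ℕ) :
    gaussProd t x (n + 1) = gaussProd t x n * (x - t ^ n) :=
  Finset.prod_range_succ _ n

theorem map_gaussProd {S F : Type*} [CommRing S] [FunLike F R S] [RingHomClass F R S] (f : F)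
    (t x : R) (n : ℕ) : f (gaussProd t x n) = gaussProd (f t) (f x) n := by
  simp only [gaussProd, map_prod, map_sub, map_pow]

theorem pow_mul_gaussProd_of_mul_eq_one {t u : R} (h : t * u = 1) (x : R) (n : ℕ) :
    t ^ n * gaussProd t (u * x) n = ∏ j ∈ Finset.range n, (x - t ^ (j + 1)) := by
  calc t ^ n * gaussProd t (u * x) n
      = ∏ j ∈ Finset.range n, t * (u * x - t ^ j) := by
        rw [gaussProd, Finset.prod_mul_distrib, Finset.prod_const, Finset.card_range]
    _ = ∏ j ∈ Finset.range n, (x - t ^ (j + 1)) := by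
        refine Finset.prod_congr rfl fun j _ => ?_
        linear_combination x * h

theorem gaussProd_succ_of_mul_eq_one {t u : R} (h : t * u = 1) (x : R) (n : ℕ) :
    gaussProd t x (n + 1) = (x - 1) * (t ^ n * gaussProd t (u * x) n) := by
  rw [pow_mul_gaussProd_of_mul_eq_one h, gaussProd, Finset.prod_range_succ', pow_zero, mul_comm]

end GaussProd

theorem q_ne_zero : q ≠ 0 :=
  RatFunc.X_ne_zero

/-- The specialization `y = z = 1`, with values in the same ring `K[x,y,z,w]`. -/
def specYZ : P4 →ₐ[K] P4 :=
  aeval ![(X 0 : P4), 1, 1, X 3]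

theorem specYZ_xP : specYZ xP = X 0 := by simp [specYZ, xP]

theorem specYZ_yP : specYZ yP = 1 := by simp [specYZ, yP]

theorem specYZ_zP : specYZ zP = 1 := by simp [specYZ, zP]

theorem specYZ_wP : specYZ wP = X 3 := by simp [specYZ, wP]

theorem specYZ_C (k : K) : specYZ (C k) = C k :=
  algHom_C specYZ k

theorem specYZ_scl (a d : ℤ) (p : P4) : specYZ (scl a 0 0 d p) = scl a 0 0 d (specYZ p) := by
  have h : specYZ.comp (scl a 0 0 d) = (scl a 0 0 d).comp specYZ := by
    refine algHom_ext fun i => ?_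
    fin_cases i <;> simp [specYZ, scl, algHom_C, algebraMap_eq]
  exact DFunLike.congr_fun h p

theorem specYZ_Qb0_succ (b : ℕ) :
    specYZ (Qb0 (b + 1)) =
      C (q ^ (6 * b)) * ((X 0 - 1) * (X 3 - 1)) * scl (-4) 0 0 (-2) (specYZ (Qb0 b)) := by
  have hq : q ^ (6 * (b : ℤ)) = q ^ (6 * b) := mod_cast zpow_natCast q (6 * b)
  simp only [Qb0, map_add, map_mul, map_sub, map_one, specYZ_xP, specYZ_yP, specYZ_zP, specYZ_wP,
    specYZ_C, specYZ_scl, hq]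
  ring

theorem specYZ_Q_succ (b c : ℕ) :
    specYZ (Q b (c + 1)) =
      -(C (q ^ (6 * b + 8 * c)) * ((X 0 - 1) * (X 3 - 1)) * (X 3 - C (q ^ (2 * (b + 2 * c + 1))))
        * scl (-4) 0 0 (-2) (specYZ (Q b c))) := by
  have hlead : (C (q ^ (6 * (b : ℤ) + 8 * (c : ℤ) - 2)) : P4) * C (q ^ (2 : ℤ)) =
      C (q ^ (6 * b + 8 * c)) := by
    rw [← C_mul, ← zpow_add₀ q_ne_zero, ← zpow_natCast]
    congr 2; push_cast; ring
  have hroot : (C (q ^ (2 * (b : ℤ) + 4 * (c : ℤ) + 4)) : P4) =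
      C (q ^ (2 : ℤ)) * C (q ^ (2 * (b + 2 * c + 1))) := by
    rw [← C_mul, ← zpow_natCast, ← zpow_add₀ q_ne_zero]
    congr 2; push_cast; ring
  simp only [Q, map_add, map_mul, map_sub, map_neg, map_pow, map_one, specYZ_xP, specYZ_yP,
    specYZ_zP, specYZ_wP, specYZ_C, specYZ_scl]
  simp only [← map_pow, hroot, ← hlead]
  ring

/-- The closed form of the specialization up to sign, with `m` linear factors in `x` and `n`
in `w`. -/
def gaussXW (m n : ℕ) : P4 :=
  gaussProd (C (q ^ 4)) (X 0) m * gaussProd (C (q ^ 2)) (X 3) n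

theorem gaussXW_succ_right (m n : ℕ) :
    gaussXW m (n + 1) = gaussXW m n * (X 3 - C (q ^ (2 * n))) := by
  rw [gaussXW, gaussProd_succ, ← map_pow, ← pow_mul, ← mul_assoc, gaussXW]

theorem scl_gaussXW (a b c d : ℤ) (m n : ℕ) :
    scl a b c d (gaussXW m n) =
      gaussProd (C (q ^ 4)) (C (q ^ a) * X 0) m * gaussProd (C (q ^ 2)) (C (q ^ d) * X 3) n := by
  have map_gauss (t : K) (x : P4) (k : ℕ) :
      scl a b c d (gaussProd (C t) x k) = gaussProd (C t) (scl a b c d x) k := by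
    rw [map_gaussProd, algHom_C, algebraMap_eq]
  rw [gaussXW, map_mul, map_gauss, map_gauss]
  simp [scl]

theorem gaussXW_succ_succ (m n : ℕ) :
    gaussXW (m + 1) (n + 1) =
      C (q ^ (4 * m + 2 * n)) * ((X 0 - 1) * (X 3 - 1)) * scl (-4) 0 0 (-2) (gaussXW m n) := by
  have C_mul_C_zpow_neg (k : ℕ) : (C (q ^ k) : P4) * C (q ^ (-k : ℤ)) = 1 := by
    rw [← C_mul, zpow_neg, zpow_natCast, mul_inv_cancel₀ (pow_ne_zero k q_ne_zero), C_1]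
  rw [gaussXW, gaussProd_succ_of_mul_eq_one (C_mul_C_zpow_neg 4),
    gaussProd_succ_of_mul_eq_one (C_mul_C_zpow_neg 2), scl_gaussXW]
  simp only [pow_add, pow_mul, C_mul, map_pow, Nat.cast_ofNat]
  ring

theorem specYZ_Qb0 (b : ℕ) : specYZ (Qb0 b) = gaussXW b b := by
  induction b with
  | zero => simp only [Qb0, gaussXW, gaussProd_zero, map_one, mul_one]
  | succ b ih =>
    rw [specYZ_Qb0_succ, ih, gaussXW_succ_succ, ← add_mul]

theorem specYZ_Q (b c : ℕ) : specYZ (Q b c) = C ((-1) ^ c) * gaussXW (b + c) (b + 2 * c) := by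
  induction c with
  | zero => rw [Q, specYZ_Qb0, pow_zero, C_1, one_mul]; rfl
  | succ c ih =>
    have hexp : 4 * (b + c) + 2 * (b + 2 * c) = 6 * b + 8 * c := by ring
    calc specYZ (Q b (c + 1))
        = -(C ((-1) ^ c) * (gaussXW (b + c + 1) (b + 2 * c + 1)
            * (X 3 - C (q ^ (2 * (b + 2 * c + 1)))))) := by
          rw [specYZ_Q_succ, ih, map_mul, algHom_C, algebraMap_eq, gaussXW_succ_succ, hexp]
          ring
      _ = C ((-1) ^ (c + 1)) * gaussXW (b + (c + 1)) (b + 2 * (c + 1)) := by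
          rw [← gaussXW_succ_right, pow_succ, mul_neg_one, C_neg, neg_mul]
          rfl

/-- `Q_{b,c}(x,1,1,w) = (−1)^c ∏_{j<b+c}(x − q^{4j}) ∏_{j<b+2c}(w − q^{2j})`. -/
theorem Q_spec_y1z1 (b c : ℕ) :
    aeval ![(X 0 : P4), 1, 1, X 3] (Q b c) =
      C ((-1 : K) ^ c)
        * (∏ j ∈ Finset.range (b + c), ((X 0 : P4) - C (q ^ (4 * j))))
        * (∏ j ∈ Finset.range (b + 2 * c), ((X 3 : P4) - C (q ^ (2 * j)))) := by
  simpa only [specYZ, gaussXW, gaussProd, ← map_pow, ← pow_mul, ← mul_assoc] using specYZ_Q b c
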